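/- arXiv:0811.4087 — 2 statements merged into one kernel-verified Lean document; each statement's English description precedes it below -/
import Mathlib

section
/- Let A be a Banach algebra with unit, H : ℝ → A continuous, and t ≥ 0. Then for every n ≥ 1: n · H_n(t) = Σ_{i=0}^{n−1} H_i(t) · H_{𝒟_{n−i}}(t), where H_{𝒟_m}(t) := Σ_{j=0}^{m−1} (−1)^j H_{D_{={1,…,j}}^{(m)}}(t) is the iterated integral evaluated on the Dynkin element 𝒟_m = Σ_{j=0}^{m−1} (−1)^j D_{={1,…,j}}^{(m)}. -/
open MeasureTheory

open Classical in
/-- The descent set of a permutation `σ ∈ S_n` (1-based convention):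
`Desc(σ) = {i ∈ {1,…,n−1} : σ(i) > σ(i+1)}`. -/
noncomputable def descSet {n : ℕ} (σ : Equiv.Perm (Fin n)) : Finset ℕ :=
  (Finset.Ioo 0 n).filter
    (fun i => ∃ h : i < n, σ ⟨i, h⟩ < σ ⟨i - 1, lt_of_le_of_lt (Nat.sub_le i 1) h⟩)

/-- The simplex `Δ_t^n = {0 ≤ t₁ ≤ ⋯ ≤ tₙ ≤ t}` inside `Fin n → ℝ`. -/
def simplex (n : ℕ) (t : ℝ) : Set (Fin n → ℝ) :=
  {u | (∀ i, 0 ≤ u i ∧ u i ≤ t) ∧ ∀ i j, i ≤ j → u i ≤ u j}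

variable {A : Type*} [NormedRing A] [NormedAlgebra ℝ A] [CompleteSpace A]

/-- The iterated integral `H_σ(t) = ∫_{Δ_t^n} H(t_{σ(1)})⋯H(t_{σ(n)}) dt₁⋯dtₙ`. -/
noncomputable def Hperm (H : ℝ → A) {n : ℕ} (σ : Equiv.Perm (Fin n)) (t : ℝ) : A :=
  ∫ u in simplex n t, (List.ofFn (fun j => H (u (σ j)))).prod

/-- `H_n(t) = ∫_{Δ_t^n} H(t₁)⋯H(tₙ) dt₁⋯dtₙ`, with `H_0(t) = 1`. -/
noncomputable def Hn (H : ℝ → A) : ℕ → ℝ → A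
  | 0, _ => 1
  | (n + 1), t => Hperm H (1 : Equiv.Perm (Fin (n + 1))) t

/-- The iterated integral evaluated on the Dynkin element:
`H_{𝒟_m}(t) = Σ_{j=0}^{m-1} (-1)^j H_{D_{={1,…,j}}^{(m)}}(t)`. -/
noncomputable def HDyn (H : ℝ → A) (m : ℕ) (t : ℝ) : A :=
  ∑ j ∈ Finset.range m, (-1 : ℝ) ^ j •
    ∑ σ ∈ Finset.univ.filter
        (fun σ : Equiv.Perm (Fin m) => descSet σ = Finset.Icc 1 j),
      Hperm H σ t

/-!
Up to null sets, the sum of the `H_σ(t)` over the permutations `σ` with descent set `S` is the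
integral of `H(v₁)⋯H(vₙ)` over the points `v` of the cube `[0,t]ⁿ` with descent set `S`. By Fubini
these integrals multiply by concatenating points, and the concatenation either descends at the
junction or does not. For `H_i(t)` times the integral with descent set `{1,…,j}` in dimension
`n - i` this gives the integrals with descent sets `{i+1,…,i+j}` and `{i,…,i+j}`. In the
alternating sum over `j` all terms cancel but `H_n(t)` and `Q_i - Q_{i+1}`, where `Q_i` is the
alternating sum of the integrals whose descent sets are nonempty runs starting at `i`. Summing over
`i` leaves `n · H_n(t) + Q_0 - Q_n`, and `Q_0 = Q_n = 0` because descents lie strictly between `0`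
and `n`.
-/

section Descents

variable {α : Type*}

/-- The descent set `{i : vᵢ > vᵢ₊₁}` of a finite sequence, indexed from `1` as in `descSet`. -/
def tupleDescSet [LT α] [DecidableLT α] {n : ℕ} (v : Fin n → α) : Finset ℕ :=
  (Finset.Ioo 0 n).filter
    (fun i => ∃ h : i < n, v ⟨i, h⟩ < v ⟨i - 1, lt_of_le_of_lt (Nat.sub_le i 1) h⟩)

lemma succ_mem_tupleDescSet [LT α] [DecidableLT α] {n : ℕ} {v : Fin n → α} {i : ℕ} :
    i + 1 ∈ tupleDescSet v ↔ ∃ h : i + 1 < n, v ⟨i + 1, h⟩ < v ⟨i, by omega⟩ := by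
  simp only [tupleDescSet, Finset.mem_filter, Finset.mem_Ioo, Nat.add_sub_cancel,
    Nat.succ_pos, true_and]
  exact ⟨And.right, fun h => ⟨h.1, h⟩⟩

lemma tupleDescSet_subset_Ioo [LT α] [DecidableLT α] {n : ℕ} (v : Fin n → α) :
    tupleDescSet v ⊆ Finset.Ioo 0 n :=
  Finset.filter_subset _ _

lemma zero_notMem_tupleDescSet [LT α] [DecidableLT α] {n : ℕ} (v : Fin n → α) :
    0 ∉ tupleDescSet v :=
  fun h => (Finset.mem_Ioo.1 (tupleDescSet_subset_Ioo v h)).1.false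

lemma tupleDescSet_eq_empty_iff_monotone [LinearOrder α] {n : ℕ} {v : Fin n → α} :
    tupleDescSet v = ∅ ↔ Monotone v := by
  constructor
  · intro h
    cases n with
    | zero => exact Subsingleton.monotone v
    | succ n =>
      refine Fin.monotone_iff_le_succ.2 fun i => not_lt.1 fun hi => ?_
      have : (i : ℕ) + 1 ∈ tupleDescSet v := succ_mem_tupleDescSet.2 ⟨by omega, hi⟩
      simp [h] at this
  · intro hv
    refine Finset.eq_empty_of_forall_notMem fun i hi => ?_
    obtain _ | i := i
    · exact zero_notMem_tupleDescSet v hi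
    · obtain ⟨h, hlt⟩ := succ_mem_tupleDescSet.1 hi
      exact hlt.not_ge (hv (Fin.mk_le_mk.2 i.le_succ))

section Append

variable [LT α] [DecidableLT α] {k l : ℕ} (x : Fin k → α) (y : Fin l → α)

lemma mem_tupleDescSet_append_of_lt {i : ℕ} (hi : i < k) :
    i ∈ tupleDescSet (Fin.append x y) ↔ i ∈ tupleDescSet x := by
  obtain _ | i := i
  · simp [zero_notMem_tupleDescSet]
  have hleft (j : ℕ) (h : j < k) : Fin.append x y ⟨j, by omega⟩ = x ⟨j, h⟩ :=
    Fin.append_left x y ⟨j, h⟩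
  rw [succ_mem_tupleDescSet, succ_mem_tupleDescSet, exists_prop_of_true hi,
    exists_prop_of_true (by omega), hleft (i + 1) hi, hleft i (by omega)]

lemma add_mem_tupleDescSet_append {i : ℕ} (hi : i ≠ 0) :
    k + i ∈ tupleDescSet (Fin.append x y) ↔ i ∈ tupleDescSet y := by
  obtain ⟨i, rfl⟩ := Nat.exists_eq_succ_of_ne_zero hi
  have hright (j : ℕ) (h : j < l) : Fin.append x y ⟨k + j, by omega⟩ = y ⟨j, h⟩ :=
    Fin.append_right x y ⟨j, h⟩
  rw [Nat.succ_eq_add_one, ← Nat.add_assoc, succ_mem_tupleDescSet, succ_mem_tupleDescSet]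
  refine ⟨fun ⟨h, hlt⟩ => ⟨by omega, ?_⟩, fun ⟨h, hlt⟩ => ⟨by omega, ?_⟩⟩
  · rwa [← hright (i + 1) (by omega), ← hright i (by omega)]
  · rwa [← hright (i + 1) (by omega), ← hright i (by omega)] at hlt

lemma erase_tupleDescSet_append :
    (tupleDescSet (Fin.append x y)).erase k =
      tupleDescSet x ∪ (tupleDescSet y).map (addLeftEmbedding k) := by
  ext i
  simp only [Finset.mem_erase, Finset.mem_union, Finset.mem_map, addLeftEmbedding_apply]
  have hx (hi : k ≤ i) : i ∉ tupleDescSet x := fun h =>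
    hi.not_gt (Finset.mem_Ioo.1 (tupleDescSet_subset_Ioo x h)).2
  obtain hi | hi := lt_or_ge i k
  · rw [mem_tupleDescSet_append_of_lt x y hi]
    grind
  · obtain ⟨i, rfl⟩ := Nat.exists_eq_add_of_le hi
    by_cases h0 : i = 0
    · grind [zero_notMem_tupleDescSet]
    · rw [add_mem_tupleDescSet_append x y h0]
      grind

end Append

lemma union_map_addLeftEmbedding_inj {k : ℕ} {S S' T T' : Finset ℕ} (hS : ∀ i ∈ S, i < k)
    (hS' : ∀ i ∈ S', i < k) :
    S ∪ T.map (addLeftEmbedding k) = S' ∪ T'.map (addLeftEmbedding k) ↔ S = S' ∧ T = T' := by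
  refine ⟨fun h => ?_, fun ⟨hS, hT⟩ => hS ▸ hT ▸ rfl⟩
  simp only [Finset.ext_iff, Finset.mem_union, Finset.mem_map, addLeftEmbedding_apply] at h ⊢
  constructor
  · intro i
    grind
  · intro i
    have := h (k + i)
    grind

lemma notMem_union_map_addLeftEmbedding {k : ℕ} {S T : Finset ℕ} (hS : ∀ i ∈ S, i < k)
    (hT : 0 ∉ T) : k ∉ S ∪ T.map (addLeftEmbedding k) := by
  simpa [hT] using fun h => (hS k h).false

end Descents

section Standardization

variable {α : Type*} [LinearOrder α] {n : ℕ}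

/-- The standardization of a finite sequence: the permutation sending each position to the rank of
its entry, equal entries being ranked from left to right. -/
def standardization (v : Fin n → α) : Equiv.Perm (Fin n) :=
  (Tuple.sort v)⁻¹

lemma standardization_le_iff {v : Fin n → α} {a b : Fin n} (hab : a ≤ b) :
    standardization v a ≤ standardization v b ↔ v a ≤ v b := by
  obtain ⟨hmono, hties⟩ := Tuple.eq_sort_iff.1 (rfl : Tuple.sort v = Tuple.sort v)
  obtain ⟨i, rfl⟩ := (Tuple.sort v).surjective a
  obtain ⟨j, rfl⟩ := (Tuple.sort v).surjective b
  simp only [standardization, Equiv.Perm.inv_def, Equiv.symm_apply_apply]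
  refine ⟨fun h => hmono h, fun h => not_lt.1 fun hji => ?_⟩
  exact (hties j i hji ((hmono hji.le).antisymm h)).not_ge hab

lemma descSet_standardization (v : Fin n → α) : descSet (standardization v) = tupleDescSet v := by
  ext i
  simp only [descSet, tupleDescSet, Finset.mem_filter]
  exact and_congr_right fun _ => exists_congr fun h =>
    lt_iff_lt_of_le_iff_le (standardization_le_iff (Fin.mk_le_mk.2 (Nat.sub_le i 1)))

lemma monotone_comp_symm_iff_standardization_eq {v : Fin n → α} (hv : Function.Injective v)
    {σ : Equiv.Perm (Fin n)} : Monotone (v ∘ σ.symm) ↔ standardization v = σ := by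
  rw [standardization, inv_eq_iff_eq_inv, eq_comm, Tuple.eq_sort_iff]
  refine ⟨fun h => ⟨h, fun i j hij heq => ?_⟩, And.left⟩
  exact absurd (σ⁻¹.injective (hv heq)) hij.ne

lemma measurableSet_standardization_eq [TopologicalSpace α] [OrderClosedTopology α]
    [SecondCountableTopology α] [MeasurableSpace α] [OpensMeasurableSpace α]
    (σ : Equiv.Perm (Fin n)) : MeasurableSet {v : Fin n → α | standardization v = σ} := by
  have hset : {v : Fin n → α | standardization v = σ} =
      {v | Monotone (v ∘ ⇑σ⁻¹) ∧
        ∀ i j, i < j → (v (σ⁻¹ i) ≠ v (σ⁻¹ j) ∨ σ⁻¹ i < σ⁻¹ j)} := by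
    ext v
    rw [Set.mem_ofPred_eq, standardization, inv_eq_iff_eq_inv, eq_comm, Tuple.eq_sort_iff]
    simp only [imp_iff_not_or, Set.mem_ofPred_eq]
  simp only [hset, Monotone, Set.ofPred_and, Set.ofPred_or, Set.ofPred_forall, Function.comp_apply]
  refine .inter (.iInter fun i => .iInter fun j => .iInter fun _ => ?_)
    (.iInter fun i => .iInter fun j => .iInter fun _ => .union ?_ (.const _))
  · exact measurableSet_le (by fun_prop) (by fun_prop)
  · exact (measurableSet_eq_fun (by fun_prop) (by fun_prop)).compl

end Standardization

section MeasureTheory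

lemma ae_injective {ι : Type*} [Fintype ι] : ∀ᵐ v : ι → ℝ, Function.Injective v := by
  have hne (i j : ι) (hij : i ≠ j) : ∀ᵐ v : ι → ℝ, v i ≠ v j := by
    classical
    let S : Submodule ℝ (ι → ℝ) :=
      LinearMap.ker (LinearMap.proj (R := ℝ) (φ := fun _ => ℝ) i - LinearMap.proj j)
    have hS : S ≠ ⊤ := fun h => by
      have : Pi.single i (1 : ℝ) ∈ S := h ▸ Submodule.mem_top
      simp [S, hij.symm] at this
    have : (S : Set (ι → ℝ)) = {v | ¬ v i ≠ v j} := by ext v; simp [S, sub_eq_zero]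
    exact ae_iff.2 (this ▸ Measure.addHaar_submodule volume S hS)
  have : ∀ᵐ v : ι → ℝ, ∀ i j, i ≠ j → v i ≠ v j := by
    simpa only [ae_all_iff] using hne
  filter_upwards [this] with v hv i j hij
  exact not_ne_iff.1 fun h => hv i j h hij

/-- Concatenation of finite sequences as a measurable equivalence. -/
def finAppendMeasurableEquiv (α : Type*) [MeasurableSpace α] (k l : ℕ) :
    (Fin k → α) × (Fin l → α) ≃ᵐ (Fin (k + l) → α) where
  toEquiv := Fin.appendEquiv k l
  measurable_toFun := measurable_pi_lambda _ <| Fin.addCases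
    (fun i => by
      simp only [Fin.appendEquiv, Equiv.coe_fn_mk, Fin.append_left]
      fun_prop)
    (fun i => by
      simp only [Fin.appendEquiv, Equiv.coe_fn_mk, Fin.append_right]
      fun_prop)
  measurable_invFun := by
    simp only [Fin.appendEquiv, Equiv.coe_fn_symm_mk]
    fun_prop

lemma measurePreserving_finAppendMeasurableEquiv {α : Type*} [MeasurableSpace α] (μ : Measure α)
    [SigmaFinite μ] (k l : ℕ) :
    MeasurePreserving (finAppendMeasurableEquiv α k l)
      ((Measure.pi fun _ => μ).prod (Measure.pi fun _ => μ)) (Measure.pi fun _ => μ) := by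
  refine ⟨(finAppendMeasurableEquiv α k l).measurable, (Measure.pi_eq fun s _ => ?_).symm⟩
  have hpre : finAppendMeasurableEquiv α k l ⁻¹' Set.univ.pi s =
      (Set.univ.pi fun i => s (Fin.castAdd l i)) ×ˢ (Set.univ.pi fun i => s (Fin.natAdd k i)) := by
    ext p
    simp [finAppendMeasurableEquiv, Fin.appendEquiv, Fin.forall_fin_add]
  rw [MeasurableEquiv.map_apply, hpre, Measure.prod_prod, Measure.pi_pi, Measure.pi_pi,
    Fin.prod_univ_add]

end MeasureTheory

section OrderedProd

/-- The noncommutative product `H(v₁)⋯H(vₙ)`. -/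
def orderedProd {α M : Type*} [Monoid M] (H : α → M) {n : ℕ} (v : Fin n → α) : M :=
  (List.ofFn fun j => H (v j)).prod

lemma orderedProd_append {α M : Type*} [Monoid M] (H : α → M) {k l : ℕ} (x : Fin k → α)
    (y : Fin l → α) : orderedProd H (Fin.append x y) = orderedProd H x * orderedProd H y := by
  have hH {n : ℕ} (v : Fin n → α) : orderedProd H v = ((List.ofFn v).map H).prod := by
    simp [orderedProd, List.map_ofFn, Function.comp_def]
  simp only [hH, List.ofFn_fin_append, List.map_append, List.prod_append]

lemma integrable_orderedProd {α R : Type*} [MeasurableSpace α] {μ : Measure α} [SigmaFinite μ]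
    [NormedRing R] {H : α → R} (hH : Integrable H μ) (n : ℕ) :
    Integrable (fun v : Fin n → α => orderedProd H v) (Measure.pi fun _ => μ) := by
  cases n with
  | zero =>
    rw [Measure.pi_of_empty]
    simp only [orderedProd, List.ofFn_zero]
    exact integrable_const _
  | succ n =>
    have hmeas : AEStronglyMeasurable (fun v : Fin (n + 1) → α => orderedProd H v)
        (Measure.pi fun _ => μ) := by
      have hl := (List.ofFn fun j (v : Fin (n + 1) → α) => H (v j)).aestronglyMeasurable_fun_prod
        (μ := Measure.pi fun _ => μ) fun f hf => by
          obtain ⟨j, rfl⟩ := List.mem_ofFn.1 hf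
          exact hH.aestronglyMeasurable.comp_quasiMeasurePreserving
            (Measure.quasiMeasurePreserving_eval _ j)
      simp only [List.map_ofFn] at hl
      exact hl
    refine (Integrable.fintype_prod (fun _ => hH.norm)).mono' hmeas (ae_of_all _ fun v => ?_)
    calc ‖orderedProd H v‖ ≤ ((List.ofFn fun j => H (v j)).map norm).prod :=
        List.norm_prod_le' (by simp)
      _ = ∏ j, ‖H (v j)‖ := by rw [List.map_ofFn, List.prod_ofFn]; rfl

lemma integrableOn_orderedProd {α R : Type*} [MeasurableSpace α] {μ : Measure α} [SigmaFinite μ]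
    [NormedRing R] {H : α → R} {s : Set α} (hH : IntegrableOn H s μ) {n : ℕ}
    {r : Set (Fin n → α)} (hr : ∀ v ∈ r, ∀ i, v i ∈ s) :
    IntegrableOn (fun v : Fin n → α => orderedProd H v) r (Measure.pi fun _ => μ) := by
  have hpi := integrable_orderedProd hH n
  rw [← Measure.restrict_pi_pi] at hpi
  exact IntegrableOn.mono_set hpi fun v hv i _ => hr v hv i

end OrderedProd

section RibbonIntegral

variable {R : Type*} [NormedRing R] [NormedAlgebra ℝ R]

/-- The points of the cube `[0,t]ⁿ` with descent set `S`: up to boundaries, a union of simplices. -/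
def ribbonRegion (n : ℕ) (S : Finset ℕ) (t : ℝ) : Set (Fin n → ℝ) :=
  {v | (∀ i, v i ∈ Set.Icc 0 t) ∧ tupleDescSet v = S}

/-- The iterated integral of `H` over the points of the cube `[0,t]ⁿ` with descent set `S`. It plays
the role of the ribbon Schur function of the composition of `n` encoded by `S`. -/
noncomputable def ribbonIntegral (H : ℝ → R) (n : ℕ) (S : Finset ℕ) (t : ℝ) : R :=
  ∫ v in ribbonRegion n S t, orderedProd H v

lemma simplex_eq_ribbonRegion_empty (n : ℕ) (t : ℝ) : simplex n t = ribbonRegion n ∅ t := by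
  simp only [simplex, ribbonRegion, tupleDescSet_eq_empty_iff_monotone]
  rfl

lemma Hn_eq_ribbonIntegral (H : ℝ → A) (n : ℕ) (t : ℝ) :
    Hn H n t = ribbonIntegral H n ∅ t := by
  rw [ribbonIntegral, ← simplex_eq_ribbonRegion_empty]
  cases n with
  | zero =>
    have : simplex 0 t = Set.univ := Set.eq_univ_of_forall fun v => ⟨nofun, nofun⟩
    simp [Hn, this, orderedProd, integral_unique, Measure.volume_pi_eq_dirac (0 : Fin 0 → ℝ)]
  | succ n => rfl

/-- The points of the cube `[0,t]ⁿ` with standardization `σ`: up to a null set, the simplex with its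
coordinates permuted by `σ`. -/
def chamber {n : ℕ} (σ : Equiv.Perm (Fin n)) (t : ℝ) : Set (Fin n → ℝ) :=
  {v | (∀ i, v i ∈ Set.Icc 0 t) ∧ standardization v = σ}

lemma measurableSet_chamber {n : ℕ} (σ : Equiv.Perm (Fin n)) (t : ℝ) :
    MeasurableSet (chamber σ t) := by
  simp only [chamber, Set.ofPred_and, Set.ofPred_forall]
  exact .inter (.iInter fun i => measurableSet_Icc.preimage (measurable_pi_apply i))
    (measurableSet_standardization_eq σ)

lemma ribbonRegion_eq_biUnion_chamber (n : ℕ) (S : Finset ℕ) (t : ℝ) :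
    ribbonRegion n S t =
      ⋃ σ ∈ Finset.univ.filter (fun σ : Equiv.Perm (Fin n) => descSet σ = S), chamber σ t := by
  ext v
  simp [ribbonRegion, chamber, descSet_standardization, and_comm]

lemma measurableSet_ribbonRegion (n : ℕ) (S : Finset ℕ) (t : ℝ) :
    MeasurableSet (ribbonRegion n S t) := by
  rw [ribbonRegion_eq_biUnion_chamber]
  exact Finset.measurableSet_biUnion _ fun σ _ => measurableSet_chamber σ t

lemma Hperm_eq_setIntegral_chamber (H : ℝ → R) {n : ℕ} (σ : Equiv.Perm (Fin n)) (t : ℝ) :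
    Hperm H σ t = ∫ v in chamber σ t, orderedProd H v := by
  let e := MeasurableEquiv.arrowCongr' σ.symm (MeasurableEquiv.refl ℝ)
  have hpre : simplex n t = e ⁻¹' {v | v ∘ σ.symm ∈ simplex n t} := by
    ext u
    simp [show e u = u ∘ σ from rfl, Function.comp_assoc]
  calc Hperm H σ t = ∫ u in e ⁻¹' {v | v ∘ σ.symm ∈ simplex n t}, orderedProd H (e u) := by
        rw [← hpre]; rfl
    _ = ∫ v in {v | v ∘ σ.symm ∈ simplex n t}, orderedProd H v :=
        (volume_preserving_arrowCongr' σ.symm (.refl ℝ) (.id volume)).setIntegral_preimage_emb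
          e.measurableEmbedding _ _
    _ = ∫ v in chamber σ t, orderedProd H v := by
        refine setIntegral_congr_set ?_
        filter_upwards [ae_injective] with v hv
        exact propext <| and_congr (σ.symm.surjective.forall (p := fun i => v i ∈ Set.Icc 0 t)).symm
          (monotone_comp_symm_iff_standardization_eq hv)

lemma sum_Hperm_eq_ribbonIntegral {H : ℝ → R} {t : ℝ} (hH : IntegrableOn H (Set.Icc 0 t))
    (n : ℕ) (S : Finset ℕ) :
    ∑ σ ∈ Finset.univ.filter (fun σ : Equiv.Perm (Fin n) => descSet σ = S), Hperm H σ t =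
      ribbonIntegral H n S t := by
  have hint (σ : Equiv.Perm (Fin n)) : IntegrableOn (orderedProd H) (chamber σ t) :=
    integrableOn_orderedProd hH fun v hv => hv.1
  rw [ribbonIntegral, ribbonRegion_eq_biUnion_chamber,
    integral_biUnion_finset _ (fun σ _ => measurableSet_chamber σ t)
      (fun σ _ τ _ hne => Set.disjoint_left.2 fun v hσ hτ => hne (hσ.2.symm.trans hτ.2))
      (fun σ _ => hint σ)]
  exact Finset.sum_congr rfl fun σ _ => Hperm_eq_setIntegral_chamber H σ t

lemma HDyn_eq_sum_ribbonIntegral {H : ℝ → R} {t : ℝ} (hH : IntegrableOn H (Set.Icc 0 t)) (m : ℕ) :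
    HDyn H m t =
      ∑ j ∈ Finset.range m, (-1 : ℝ) ^ j • ribbonIntegral H m (Finset.Icc 1 j) t :=
  Finset.sum_congr rfl fun j _ => by rw [sum_Hperm_eq_ribbonIntegral hH]

lemma ribbonIntegral_eq_zero_of_zero_mem (H : ℝ → R) (n : ℕ) {S : Finset ℕ} (hS : 0 ∈ S) (t : ℝ) :
    ribbonIntegral H n S t = 0 := by
  have : ribbonRegion n S t = ∅ :=
    Set.eq_empty_of_forall_notMem fun v hv => zero_notMem_tupleDescSet v (hv.2 ▸ hS)
  rw [ribbonIntegral, this, setIntegral_empty]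

lemma append_mem_ribbonRegion_iff {k l : ℕ} {S T : Finset ℕ} (hS : ∀ i ∈ S, i < k) (hT : 0 ∉ T)
    {t : ℝ} (x : Fin k → ℝ) (y : Fin l → ℝ) :
    Fin.append x y ∈ ribbonRegion (k + l) (S ∪ T.map (addLeftEmbedding k)) t ∪
        ribbonRegion (k + l) (insert k (S ∪ T.map (addLeftEmbedding k))) t ↔
      x ∈ ribbonRegion k S t ∧ y ∈ ribbonRegion l T t := by
  have hk := notMem_union_map_addLeftEmbedding hS hT
  have hx : ∀ i ∈ tupleDescSet x, i < k := fun i hi =>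
    (Finset.mem_Ioo.1 (tupleDescSet_subset_Ioo x hi)).2
  have hdesc : tupleDescSet (Fin.append x y) = S ∪ T.map (addLeftEmbedding k) ∨
      tupleDescSet (Fin.append x y) = insert k (S ∪ T.map (addLeftEmbedding k)) ↔
      tupleDescSet x = S ∧ tupleDescSet y = T := by
    rw [← union_map_addLeftEmbedding_inj hx hS, ← erase_tupleDescSet_append]
    grind
  simp only [ribbonRegion, Set.mem_union, Set.mem_ofPred_eq, ← and_or_left, hdesc,
    Fin.forall_fin_add, Fin.append_left, Fin.append_right]
  tauto

/-- The product rule of ribbon Schur functions: a concatenation of points with descent sets `S` and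
`T` may or may not descend at the junction `k`. -/
lemma ribbonIntegral_mul_ribbonIntegral {H : ℝ → A} {t : ℝ} (hH : IntegrableOn H (Set.Icc 0 t))
    {k l : ℕ} {S T : Finset ℕ} (hS : ∀ i ∈ S, i < k) (hT : 0 ∉ T) :
    ribbonIntegral H k S t * ribbonIntegral H l T t =
      ribbonIntegral H (k + l) (S ∪ T.map (addLeftEmbedding k)) t +
        ribbonIntegral H (k + l) (insert k (S ∪ T.map (addLeftEmbedding k))) t := by
  set U := S ∪ T.map (addLeftEmbedding k)
  let e := finAppendMeasurableEquiv ℝ k l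
  have he : MeasurePreserving e := measurePreserving_finAppendMeasurableEquiv volume k l
  have hpre : e ⁻¹' (ribbonRegion (k + l) U t ∪ ribbonRegion (k + l) (insert k U) t) =
      ribbonRegion k S t ×ˢ ribbonRegion l T t :=
    Set.ext fun p => append_mem_ribbonRegion_iff hS hT p.1 p.2
  have hdisj : Disjoint (ribbonRegion (k + l) U t) (ribbonRegion (k + l) (insert k U) t) := by
    refine Set.disjoint_left.2 fun v hv hv' => ?_
    have hk : k ∉ U := notMem_union_map_addLeftEmbedding hS hT
    exact hk (hv.2.symm.trans hv'.2 ▸ Finset.mem_insert_self k U)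
  have hint {n : ℕ} (S : Finset ℕ) : IntegrableOn (orderedProd H) (ribbonRegion n S t) :=
    integrableOn_orderedProd hH fun v hv => hv.1
  calc ribbonIntegral H k S t * ribbonIntegral H l T t
      = ∫ p in ribbonRegion k S t ×ˢ ribbonRegion l T t,
          orderedProd H p.1 * orderedProd H p.2 := by
        rw [Measure.volume_eq_prod, ← Measure.prod_restrict]
        exact (integral_prod_bilin (ContinuousLinearMap.mul ℝ A) (hint S) (hint T)).symm
    _ = ∫ p in ribbonRegion k S t ×ˢ ribbonRegion l T t, orderedProd H (e p) :=
        integral_congr_ae <| ae_of_all _ fun p => (orderedProd_append H p.1 p.2).symm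
    _ = ∫ v in ribbonRegion (k + l) U t ∪ ribbonRegion (k + l) (insert k U) t,
          orderedProd H v := by
        rw [← hpre, he.setIntegral_preimage_emb e.measurableEmbedding]
    _ = ribbonIntegral H (k + l) U t + ribbonIntegral H (k + l) (insert k U) t :=
        setIntegral_union hdisj (measurableSet_ribbonRegion _ _ _) (hint _) (hint _)

lemma Hn_mul_ribbonIntegral_Icc {H : ℝ → A} {t : ℝ} (hH : IntegrableOn H (Set.Icc 0 t))
    (k l j : ℕ) :
    Hn H k t * ribbonIntegral H l (Finset.Icc 1 j) t =
      ribbonIntegral H (k + l) (Finset.Icc (k + 1) (k + j)) t +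
        ribbonIntegral H (k + l) (Finset.Icc k (k + j)) t := by
  rw [Hn_eq_ribbonIntegral, ribbonIntegral_mul_ribbonIntegral hH (by simp) (by simp),
    Finset.empty_union, Finset.map_add_left_Icc, Finset.insert_Icc_add_one_left_eq_Icc (by omega)]

/-- The alternating sum `∑ⱼ (-1)ʲ ∫ H(v₁)⋯H(vₙ)` over the points whose descents form a nonempty run
`{i,…,i+j}`: the quantity whose increments in `i` are the deviations of `H_i · H_{𝒟_{n-i}}` from
`H_n`. -/
noncomputable def alternatingRunIntegral (H : ℝ → R) (n i : ℕ) (t : ℝ) : R :=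
  ∑ j ∈ Finset.range (n - i), (-1 : ℝ) ^ j • ribbonIntegral H n (Finset.Icc i (i + j)) t

lemma alternatingRunIntegral_zero (H : ℝ → R) (n : ℕ) (t : ℝ) :
    alternatingRunIntegral H n 0 t = 0 :=
  Finset.sum_eq_zero fun j _ => by
    rw [ribbonIntegral_eq_zero_of_zero_mem H n (by simp), smul_zero]

lemma alternatingRunIntegral_self (H : ℝ → R) (n : ℕ) (t : ℝ) :
    alternatingRunIntegral H n n t = 0 := by
  simp [alternatingRunIntegral]

lemma sum_neg_one_pow_smul_ribbonIntegral_Icc_succ (H : ℝ → A) {n i : ℕ} (hi : i < n) (t : ℝ) :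
    ∑ j ∈ Finset.range (n - i),
        (-1 : ℝ) ^ j • ribbonIntegral H n (Finset.Icc (i + 1) (i + j)) t =
      Hn H n t - alternatingRunIntegral H n (i + 1) t := by
  obtain ⟨l, rfl⟩ := Nat.exists_eq_add_of_lt hi
  rw [show i + l + 1 - i = l + 1 by omega, Finset.sum_range_succ', alternatingRunIntegral,
    show i + l + 1 - (i + 1) = l by omega, Hn_eq_ribbonIntegral, add_comm, sub_eq_add_neg,
    ← Finset.sum_neg_distrib]
  congr 1
  · simp
  · refine Finset.sum_congr rfl fun j _ => ?_
    rw [pow_succ, mul_neg_one, neg_smul, add_right_comm i 1 j, add_assoc i j 1]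

lemma Hn_mul_HDyn {H : ℝ → A} {t : ℝ} (hH : IntegrableOn H (Set.Icc 0 t)) {n i : ℕ}
    (hi : i < n) :
    Hn H i t * HDyn H (n - i) t =
      Hn H n t + (alternatingRunIntegral H n i t - alternatingRunIntegral H n (i + 1) t) := by
  calc Hn H i t * HDyn H (n - i) t
      = ∑ j ∈ Finset.range (n - i),
          ((-1 : ℝ) ^ j • ribbonIntegral H n (Finset.Icc (i + 1) (i + j)) t +
            (-1 : ℝ) ^ j • ribbonIntegral H n (Finset.Icc i (i + j)) t) := by
        simp only [HDyn_eq_sum_ribbonIntegral hH, Finset.mul_sum, mul_smul_comm,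
          Hn_mul_ribbonIntegral_Icc hH, smul_add, Nat.add_sub_cancel' hi.le]
    _ = (Hn H n t - alternatingRunIntegral H n (i + 1) t) + alternatingRunIntegral H n i t := by
        rw [Finset.sum_add_distrib, sum_neg_one_pow_smul_ribbonIntegral_Icc_succ H hi]
        rfl
    _ = Hn H n t + (alternatingRunIntegral H n i t - alternatingRunIntegral H n (i + 1) t) := by
        abel

end RibbonIntegral

theorem nsmul_Hn_eq_sum_HDyn_general {H : ℝ → A} {t : ℝ} (hH : IntegrableOn H (Set.Icc 0 t))
    (n : ℕ) :
    n • Hn H n t = ∑ i ∈ Finset.range n, Hn H i t * HDyn H (n - i) t := by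
  symm
  calc ∑ i ∈ Finset.range n, Hn H i t * HDyn H (n - i) t
      = ∑ i ∈ Finset.range n, (Hn H n t +
          (alternatingRunIntegral H n i t - alternatingRunIntegral H n (i + 1) t)) :=
        Finset.sum_congr rfl fun i hi => Hn_mul_HDyn hH (Finset.mem_range.1 hi)
    _ = n • Hn H n t +
          (alternatingRunIntegral H n 0 t - alternatingRunIntegral H n n t) := by
        rw [Finset.sum_add_distrib, Finset.sum_const, Finset.card_range,
          Finset.sum_range_sub' (fun i => alternatingRunIntegral H n i t)]
    _ = n • Hn H n t := by
        rw [alternatingRunIntegral_zero, alternatingRunIntegral_self, sub_zero, add_zero]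

/-- `n·H_n(t) = Σ_{i=0}^{n−1} H_i(t)·H_{𝒟_{n−i}}(t)`. -/
theorem nsmul_Hn_eq_sum_HDyn (H : ℝ → A) (hH : Continuous H) (t : ℝ) (ht : 0 ≤ t)
    (n : ℕ) (hn : 1 ≤ n) :
    n • Hn H n t = ∑ i ∈ Finset.range n, Hn H i t * HDyn H (n - i) t :=
  nsmul_Hn_eq_sum_HDyn_general hH.integrableOn_Icc n
end

section
/- (Universal singular frame formula for the toy model.) Let A be a Banach algebra with unit, H : ℝ → A continuous, t ≥ 0 and λ ∈ ℝ. Set A_n^λ(t) := λ^n H_n(t) and β_n(t) := λ^n H_{𝒟_n}(t). Then for every n ≥ 1: A_n^λ(t) = Σ_{l ≤ n} Σ_{k_1+⋯+k_l = n, k_i > 0} β_{k_1}(t)·β_{k_2}(t)⋯β_{k_l}(t) / (k_1(k_1+k_2)⋯(k_1+⋯+k_l)), the inner sum being over all compositions (k_1,…,k_l) of n. -/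
open MeasureTheory

variable {A : Type*} [NormedRing A] [NormedAlgebra ℝ A] [CompleteSpace A]

/-!
Up to null sets, the words `v` in `[0, t]ⁿ` with standardization `σ` form a copy of the simplex, on
which the integral of `H(v₁) ⋯ H(vₙ)` is `H_σ(t)`. Hence the evaluation at `H` of an element
`∑ w(Desc σ) σ` of the descent algebra is the integral over the cube `[0, t]ⁿ` of
`H(v₁) ⋯ H(vₙ)` weighted by `w(Desc v)`. Products of such integrals correspond to concatenation of
words, and comparing weights on descent sets gives
`n Hₙ(t) = ∑_{m < n} Hₘ(t) H_{𝒟_{n - m}}(t)`: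
for a word with first descent `d + 1`, only `m = d` and `m = d + 1` contribute, with opposite signs.
Solving this recursion from the last block of a composition yields the formula.
-/

/-! ### Descents of words -/

section Descents

variable {α : Type*} {n : ℕ}

open Classical in
/-- The descent set of a word `v₁ ⋯ vₙ`, with the 1-based positions of `descSet`. -/
noncomputable def descents [LT α] (v : Fin n → α) : Finset ℕ :=
  (Finset.Ioo 0 n).filter
    (fun i => ∃ h : i < n, v ⟨i, h⟩ < v ⟨i - 1, lt_of_le_of_lt (Nat.sub_le i 1) h⟩)

theorem descSet_eq_descents (σ : Equiv.Perm (Fin n)) : descSet σ = descents σ := by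
  ext i
  simp [descSet, descents]

theorem mem_descents [LT α] {v : Fin n → α} {i : ℕ} :
    i ∈ descents v ↔
      0 < i ∧ ∃ h : i < n, v ⟨i, h⟩ < v ⟨i - 1, lt_of_le_of_lt (Nat.sub_le i 1) h⟩ := by
  simp only [descents, Finset.mem_filter, Finset.mem_Ioo]
  exact ⟨fun ⟨⟨h0, _⟩, h⟩ => ⟨h0, h⟩, fun ⟨h0, hn, h⟩ => ⟨⟨h0, hn⟩, hn, h⟩⟩

theorem descents_subset_Ioo [LT α] (v : Fin n → α) : descents v ⊆ Finset.Ioo 0 n := fun _ hi =>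
  let ⟨h0, hn, _⟩ := mem_descents.1 hi
  Finset.mem_Ioo.2 ⟨h0, hn⟩

theorem descents_eq_empty_iff [LinearOrder α] {v : Fin n → α} :
    descents v = ∅ ↔ Monotone v := by
  rw [Finset.eq_empty_iff_forall_notMem]
  cases n with
  | zero => exact ⟨fun _ => Subsingleton.monotone v, fun _ i hi => by simp [mem_descents] at hi⟩
  | succ n =>
    rw [Fin.monotone_iff_le_succ]
    constructor
    · intro h i
      have := h (i + 1)
      simp only [mem_descents, not_and, not_exists, not_lt] at this
      exact this (Nat.succ_pos _) (by omega)
    · rintro h i hi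
      obtain ⟨h0, hn, hlt⟩ := mem_descents.1 hi
      obtain ⟨i, rfl⟩ := Nat.exists_eq_succ_of_ne_zero h0.ne'
      exact absurd hlt (not_lt.2 (h ⟨i, by omega⟩))

theorem descSet_eq_empty_iff {σ : Equiv.Perm (Fin n)} : descSet σ = ∅ ↔ σ = 1 := by
  rw [descSet_eq_descents, descents_eq_empty_iff]
  refine ⟨fun h => Equiv.coe_fn_injective ?_, fun h => h ▸ monotone_id⟩
  exact Tuple.unique_monotone (f := id) (σ := σ) (τ := 1) h monotone_id

theorem descents_comp_of_strictMono {β : Type*} [LinearOrder α] [Preorder β] {f : α → β}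
    (hf : StrictMono f) (v : Fin n → α) : descents (f ∘ v) = descents v := by
  ext i
  simp only [mem_descents, Function.comp_apply, hf.lt_iff_lt]

open Classical in
/-- The only permutation contributing to the sum is the standardization of `v`, which has the same
descents as `v`. -/
theorem sum_ite_monotone_eq_single_descents [LinearOrder α] {v : Fin n → α}
    (hv : Function.Injective v) (S : Finset ℕ) :
    ∑ σ : Equiv.Perm (Fin n) with descSet σ = S, (if Monotone (v ∘ σ.symm) then (1 : ℝ) else 0) =
      (Pi.single S 1 : Finset ℕ → ℝ) (descents v) := by
  set τ := (Tuple.sort v).symm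
  have hsorted : Monotone (v ∘ τ.symm) := Tuple.monotone_sort v
  have hunique (σ : Equiv.Perm (Fin n)) : Monotone (v ∘ σ.symm) ↔ σ = τ := by
    refine ⟨fun h => ?_, fun h => h ▸ hsorted⟩
    have : v ∘ σ.symm = v ∘ τ.symm := Tuple.unique_monotone h hsorted
    exact Equiv.symm_bijective.injective (DFunLike.coe_injective (hv.comp_left this))
  have hdesc : descents v = descSet τ := by
    have hstrict := hsorted.strictMono_of_injective (hv.comp τ.symm.injective)
    rw [descSet_eq_descents, ← descents_comp_of_strictMono hstrict, Function.comp_assoc,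
      Equiv.symm_comp_self, Function.comp_id]
  simp only [hunique, Finset.sum_ite_eq', Finset.mem_filter, Finset.mem_univ, true_and, hdesc,
    Pi.single_apply]

/-- The descents of a word after its first `m` letters, as positions in that remaining word. -/
noncomputable def dropPositions (m : ℕ) (S : Finset ℕ) : Finset ℕ :=
  (S.preimage (m + ·) (add_right_injective m).injOn).erase 0

theorem mem_dropPositions {m i : ℕ} {S : Finset ℕ} :
    i ∈ dropPositions m S ↔ i ≠ 0 ∧ m + i ∈ S := by
  simp [dropPositions]

theorem dropPositions_of_succ_mem {m : ℕ} {S : Finset ℕ} (h : m + 1 ∈ S) :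
    dropPositions m S =
      insert 1 ((dropPositions (m + 1) S).map (addRightEmbedding 1)) := by
  ext i
  rcases i with _ | _ | i
  · simp [mem_dropPositions]
  · simp [mem_dropPositions, h]
  · simp [mem_dropPositions, ← add_assoc, add_right_comm m 1]

theorem descents_castAdd [LT α] {m k : ℕ} (u : Fin (m + k) → α) :
    descents (u ∘ Fin.castAdd k) = (descents u).filter (· < m) := by
  ext i
  simp only [mem_descents, Finset.mem_filter, Function.comp_apply, Fin.castAdd_mk]
  constructor
  · rintro ⟨h0, h, hlt⟩
    exact ⟨⟨h0, by omega, hlt⟩, h⟩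
  · rintro ⟨⟨h0, _, hlt⟩, h⟩
    exact ⟨h0, h, hlt⟩

theorem descents_natAdd [LT α] {m k : ℕ} (u : Fin (m + k) → α) :
    descents (u ∘ Fin.natAdd m) = dropPositions m (descents u) := by
  ext i
  simp only [mem_descents, mem_dropPositions, Function.comp_apply, Fin.natAdd_mk]
  constructor
  · rintro ⟨h0, h, hlt⟩
    refine ⟨h0.ne', by omega, by omega, ?_⟩
    simpa only [Nat.add_sub_assoc h0] using hlt
  · rintro ⟨h0, _, h, hlt⟩
    refine ⟨Nat.pos_of_ne_zero h0, by omega, ?_⟩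
    simpa only [Nat.add_sub_assoc (Nat.pos_of_ne_zero h0)] using hlt

end Descents

/-! ### The Dynkin element as a function of the descent set -/

section DynkinWeight

/-- The coefficient in the Dynkin element of a permutation with descent set `S`: it is `(-1) ^ j`
if `S = {1, …, j}`, and `0` if `S` is not of this form. -/
noncomputable def dynkinWeight (S : Finset ℕ) : ℝ :=
  if S = Finset.Icc 1 S.card then (-1) ^ S.card else 0

/-- The function of the descent set of a word that is obtained by evaluating `w` on the first `m`
letters and `w'` on the remaining ones. -/
noncomputable def concatWeight (m : ℕ) (w w' : Finset ℕ → ℝ) (S : Finset ℕ) : ℝ :=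
  w (S.filter (· < m)) * w' (dropPositions m S)

theorem dynkinWeight_empty : dynkinWeight ∅ = 1 := by
  simp [dynkinWeight]

theorem dynkinWeight_of_one_notMem {S : Finset ℕ} (hS : S.Nonempty) (h1 : 1 ∉ S) :
    dynkinWeight S = 0 :=
  if_neg fun h => h1 <| by rw [h]; exact Finset.mem_Icc.2 ⟨le_rfl, hS.card_pos⟩

theorem dynkinWeight_insert_one {T : Finset ℕ} (h0 : 0 ∉ T) :
    dynkinWeight (insert 1 (T.map (addRightEmbedding 1))) = -dynkinWeight T := by
  have h1 {U : Finset ℕ} (hU : 0 ∉ U) : 1 ∉ U.map (addRightEmbedding 1) := by simpa using hU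
  have hIcc (j : ℕ) :
      Finset.Icc 1 (j + 1) = insert 1 ((Finset.Icc 1 j).map (addRightEmbedding 1)) := by
    rw [Finset.map_add_right_Icc, Finset.insert_Icc_add_one_left_eq_Icc (by omega)]
  have hinj {U : Finset ℕ} (hU : 0 ∉ U) :
      insert 1 (T.map (addRightEmbedding 1)) = insert 1 (U.map (addRightEmbedding 1)) ↔ T = U := by
    refine ⟨fun h => Finset.map_injective (addRightEmbedding 1) ?_, fun h => by rw [h]⟩
    rw [← Finset.erase_insert (h1 h0), h, Finset.erase_insert (h1 hU)]
  simp only [dynkinWeight, Finset.card_insert_of_notMem (h1 h0), Finset.card_map, hIcc,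
    hinj (U := Finset.Icc 1 _) (by simp), pow_succ]
  split_ifs <;> simp

theorem sum_single_Icc_eq_dynkinWeight {n : ℕ} (hn : 0 < n) {S : Finset ℕ}
    (hS : S ⊆ Finset.Ioo 0 n) :
    ∑ j ∈ Finset.range n, (-1) ^ j * (Pi.single (Finset.Icc 1 j) 1 : Finset ℕ → ℝ) S =
      dynkinWeight S := by
  have hcard : S.card < n := by
    have := Finset.card_le_card hS
    rw [Nat.card_Ioo] at this
    omega
  rw [Finset.sum_eq_single_of_mem S.card (Finset.mem_range.2 hcard)]
  · simp [dynkinWeight, Pi.single_apply]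
  · intro j _ hj
    rw [Pi.single_eq_of_ne, mul_zero]
    rintro rfl
    simp at hj

/-- Beyond the first descent `d + 1` the first factor vanishes, and cutting before position `d`
leaves a nonempty descent set not containing `1`, on which the Dynkin weight vanishes. -/
theorem concatWeight_single_empty_dynkinWeight {S : Finset ℕ} {d : ℕ}
    (hd : IsLeast (S : Set ℕ) (d + 1)) (m : ℕ) :
    concatWeight m (Pi.single ∅ 1) dynkinWeight S =
      (if m = d then dynkinWeight (dropPositions d S) else 0) -
        if m = d + 1 then dynkinWeight (dropPositions d S) else 0 := by
  have hmem : d + 1 ∈ S := hd.1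
  have hmin : ∀ i ∈ S, d + 1 ≤ i := fun i hi => hd.2 hi
  have hmono : S.filter (· < m) = ∅ ↔ m ≤ d + 1 := by
    rw [Finset.filter_eq_empty_iff]
    exact ⟨fun h => not_lt.1 (h hmem), fun h i hi => not_lt.2 (h.trans (hmin i hi))⟩
  have hcancel : dynkinWeight (dropPositions d S) = -dynkinWeight (dropPositions (d + 1) S) := by
    rw [dropPositions_of_succ_mem hmem, dynkinWeight_insert_one (by simp [mem_dropPositions])]
  simp only [concatWeight, Pi.single_apply, hmono]
  rcases lt_trichotomy m d with hlt | rfl | hgt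
  · have hne : (dropPositions m S).Nonempty :=
      ⟨d + 1 - m, mem_dropPositions.2 ⟨by omega, by rwa [Nat.add_sub_cancel' (by omega)]⟩⟩
    have h1 : 1 ∉ dropPositions m S := fun h => by
      have := hmin _ (mem_dropPositions.1 h).2
      omega
    have hm : m ≠ d + 1 := by omega
    simp [dynkinWeight_of_one_notMem hne h1, hlt.ne, hm]
  · simp
  · obtain rfl | hgt : m = d + 1 ∨ d + 1 < m := by omega
    · simp [hcancel]
    · simp [hgt.not_ge, hgt.ne', (Nat.lt_of_succ_lt hgt).ne']

/-- The identity `∑ₘ idₘ ⋆ 𝒟ₙ₋ₘ = n idₙ`, read off descent sets. -/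
theorem sum_concatWeight_single_empty_dynkinWeight {n : ℕ} {S : Finset ℕ}
    (hS : S ⊆ Finset.Ioo 0 n) :
    ∑ m ∈ Finset.range n, concatWeight m (Pi.single ∅ 1) dynkinWeight S =
      n * (Pi.single ∅ 1 : Finset ℕ → ℝ) S := by
  rcases S.eq_empty_or_nonempty with rfl | hne
  · have (m : ℕ) : concatWeight m (Pi.single ∅ 1) dynkinWeight ∅ = 1 := by
      simp [concatWeight, dropPositions, dynkinWeight_empty]
    simp [this]
  · obtain ⟨hpos, hlt⟩ := Finset.mem_Ioo.1 (hS (S.min'_mem hne))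
    obtain ⟨d, hd⟩ := Nat.exists_eq_succ_of_ne_zero hpos.ne'
    have hleast : IsLeast (S : Set ℕ) (d + 1) := by simpa only [hd] using S.isLeast_min' hne
    simp_rw [concatWeight_single_empty_dynkinWeight hleast]
    rw [Finset.sum_sub_distrib, Finset.sum_ite_eq', Finset.sum_ite_eq',
      if_pos (Finset.mem_range.2 (by omega)), if_pos (Finset.mem_range.2 (by omega)),
      Pi.single_eq_of_ne hne.ne_empty, sub_self, mul_zero]

end DynkinWeight

/-! ### Iterated integrals over a power of a measure space -/

section WordProd

variable {α R : Type*}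

/-- The product `H(v₁) ⋯ H(vₙ)` along a word `v`. -/
def wordProd [Monoid R] (H : α → R) {n : ℕ} (v : Fin n → α) : R :=
  (List.ofFn fun i => H (v i)).prod

theorem wordProd_zero [Monoid R] (H : α → R) (v : Fin 0 → α) : wordProd H v = 1 := by
  simp [wordProd]

theorem wordProd_succ [Monoid R] (H : α → R) {n : ℕ} (v : Fin (n + 1) → α) :
    wordProd H v = H (v 0) * wordProd H (Fin.tail v) := by
  simp [wordProd, Fin.tail_def]

theorem wordProd_add [Monoid R] (H : α → R) {m k : ℕ} (u : Fin (m + k) → α) :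
    wordProd H u = wordProd H (u ∘ Fin.castAdd k) * wordProd H (u ∘ Fin.natAdd m) := by
  simp only [wordProd, List.ofFn_add, List.prod_append]
  rfl

theorem integrable_wordProd [NormedRing R] [MeasurableSpace α] {μ : Measure α} [SigmaFinite μ]
    {H : α → R} (hH : Integrable H μ) (n : ℕ) :
    Integrable (fun v : Fin n → α => wordProd H v) (Measure.pi fun _ => μ) := by
  induction n with
  | zero =>
    rw [Measure.pi_of_empty]
    simp only [wordProd_zero, integrable_const]
  | succ n ih =>
    simp only [wordProd_succ]
    exact (measurePreserving_piFinSuccAbove (fun _ => μ) 0).integrable_comp_of_integrable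
      (hH.mul_prod ih)

end WordProd

section PiMeasure

variable {α : Type*} [MeasurableSpace α]

/-- Cutting a word of length `m + k` after its `m`-th letter, as a measurable equivalence. -/
def finAddArrowEquiv (α : Type*) [MeasurableSpace α] (m k : ℕ) :
    (Fin (m + k) → α) ≃ᵐ (Fin m → α) × (Fin k → α) where
  toEquiv := (Fin.appendEquiv m k).symm
  measurable_toFun := by
    change Measurable fun u : Fin (m + k) → α => (u ∘ Fin.castAdd k, u ∘ Fin.natAdd m)
    fun_prop
  measurable_invFun := measurable_pi_iff.2 fun i => by
    cases i using Fin.addCases <;>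
      simp only [Equiv.symm_symm, Fin.appendEquiv_apply, Fin.append_left, Fin.append_right] <;>
      fun_prop

theorem finAddArrowEquiv_apply {m k : ℕ} (u : Fin (m + k) → α) :
    finAddArrowEquiv α m k u = (u ∘ Fin.castAdd k, u ∘ Fin.natAdd m) := rfl

theorem finAddArrowEquiv_symm_apply {m k : ℕ} (p : (Fin m → α) × (Fin k → α)) :
    (finAddArrowEquiv α m k).symm p = Fin.append p.1 p.2 := rfl

variable (μ : Measure α) [SigmaFinite μ]

theorem measurePreserving_finAddArrowEquiv (m k : ℕ) :
    MeasurePreserving (finAddArrowEquiv α m k) (Measure.pi fun _ => μ)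
      ((Measure.pi fun _ => μ).prod (Measure.pi fun _ => μ)) := by
  refine MeasurePreserving.symm (finAddArrowEquiv α m k).symm ⟨MeasurableEquiv.measurable _, ?_⟩
  refine (Measure.pi_eq fun s _ => ?_).symm
  have hpre : (finAddArrowEquiv α m k).symm ⁻¹' Set.univ.pi s =
      (Set.univ.pi (s ∘ Fin.castAdd k)) ×ˢ (Set.univ.pi (s ∘ Fin.natAdd m)) := by
    ext p
    simp only [Set.mem_preimage, Set.mem_univ_pi, Set.mem_prod, Fin.forall_fin_add,
      finAddArrowEquiv_symm_apply, Fin.append_left, Fin.append_right, Function.comp_apply]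
  rw [MeasurableEquiv.map_apply, hpre, Measure.prod_prod, Measure.pi_pi, Measure.pi_pi,
    Fin.prod_univ_add]
  rfl

theorem integral_pi_comp_perm {E : Type*} [NormedAddCommGroup E] [NormedSpace ℝ E] {n : ℕ}
    (σ : Equiv.Perm (Fin n)) (f : (Fin n → α) → E) :
    ∫ v, f (v ∘ σ) ∂Measure.pi (fun _ => μ) = ∫ v, f v ∂Measure.pi fun _ => μ :=
  (measurePreserving_arrowCongr' (fun _ => μ) (fun _ => μ) σ.symm (.refl α)
    fun _ => .id μ).integral_comp' f

theorem ae_injective_pi [MeasurableEq α] [NullSingletonClass μ] (n : ℕ) :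
    ∀ᵐ v ∂Measure.pi fun _ : Fin n => μ, Function.Injective v := by
  have hne (i j : Fin n) (hij : j ≠ i) : ∀ᵐ v ∂Measure.pi fun _ : Fin n => μ, v i ≠ v j := by
    cases n with
    | zero => exact i.elim0
    | succ n =>
      obtain ⟨k, rfl⟩ := Fin.exists_succAbove_eq hij
      refine (measurePreserving_piFinSuccAbove (fun _ => μ) i).quasiMeasurePreserving.ae
        (p := fun p => p.1 ≠ p.2 k) ?_
      have hmeas : MeasurableSet {p : α × (Fin n → α) | p.1 ≠ p.2 k} :=
        (measurableSet_eq_fun (by fun_prop) (by fun_prop)).compl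
      rw [Measure.ae_prod_iff_ae_ae hmeas, Measure.ae_ae_comm hmeas]
      exact .of_forall fun w => Measure.ae_ne μ (w k)
  have hall : ∀ᵐ v ∂Measure.pi fun _ : Fin n => μ, ∀ i j, j ≠ i → v i ≠ v j := by
    simpa only [ae_all_iff] using hne
  filter_upwards [hall] with v hv i j hij
  exact by_contra fun h => hv i j (Ne.symm h) hij

end PiMeasure

section OrderedLetters

theorem measurableSet_monotone {ι α : Type*} [Countable ι] [Preorder ι] [PartialOrder α]
    [TopologicalSpace α] [OrderClosedTopology α] [SecondCountableTopology α] [MeasurableSpace α]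
    [OpensMeasurableSpace α] : MeasurableSet {v : ι → α | Monotone v} := by
  simp only [Monotone, Set.ofPred_forall]
  exact .iInter fun i => .iInter fun j => .iInter fun _ =>
    measurableSet_le (measurable_pi_apply i) (measurable_pi_apply j)

variable {α : Type*} [LinearOrder α] [TopologicalSpace α] [OrderClosedTopology α]
  [SecondCountableTopology α] [MeasurableSpace α] [OpensMeasurableSpace α] {n : ℕ}

theorem measurable_descents :
    Measurable[_, ⊤] (descents : (Fin n → α) → Finset ℕ) := by
  refine @measurable_to_countable' _ _ ⊤ _ _ _ fun S => ?_
  have hpre : descents (α := α) (n := n) ⁻¹' {S} = ⋂ i, {v | i ∈ descents v ↔ i ∈ S} := by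
    ext v
    simp [Finset.ext_iff]
  rw [hpre]
  refine MeasurableSet.iInter fun i => MeasurableSet.iff ?_ (.const _)
  simp only [mem_descents]
  refine (MeasurableSet.const _).inter ?_
  by_cases h : i < n
  · simp only [h, exists_true_left]
    exact measurableSet_lt (measurable_pi_apply _) (measurable_pi_apply _)
  · simp only [h, IsEmpty.exists_iff]
    exact MeasurableSet.empty

/-- Substituting `v = u ∘ σ` turns the summands into integrals of `f` over almost disjoint sets of
words: almost every word has distinct letters, so exactly one permutation sorts it. -/
theorem sum_integral_comp_perm_eq_integral_single_descents {μ : Measure α} [SigmaFinite μ]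
    [NullSingletonClass μ] {E : Type*} [NormedAddCommGroup E] [NormedSpace ℝ E]
    {f : (Fin n → α) → E} (hf : Integrable f (Measure.pi fun _ => μ)) (S : Finset ℕ) :
    ∑ σ : Equiv.Perm (Fin n) with descSet σ = S,
        ∫ u in {u | Monotone u}, f (u ∘ σ) ∂Measure.pi (fun _ => μ) =
      ∫ v, (Pi.single S 1 : Finset ℕ → ℝ) (descents v) • f v ∂Measure.pi fun _ => μ := by
  classical
  have hset (σ : Equiv.Perm (Fin n)) :
      MeasurableSet {v : Fin n → α | Monotone (v ∘ σ.symm)} :=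
    measurableSet_monotone.preimage (by fun_prop : Measurable fun v : Fin n → α => v ∘ σ.symm)
  have hterm (σ : Equiv.Perm (Fin n)) :
      ∫ u in {u | Monotone u}, f (u ∘ σ) ∂Measure.pi (fun _ => μ) =
        ∫ v, {v | Monotone (v ∘ σ.symm)}.indicator f v ∂Measure.pi fun _ => μ := by
    rw [← integral_indicator measurableSet_monotone,
      ← integral_pi_comp_perm μ σ ({v | Monotone (v ∘ σ.symm)}.indicator f)]
    simp [Set.indicator_apply, Function.comp_assoc]
  simp_rw [hterm]
  rw [← integral_finsetSum _ fun σ _ => hf.indicator (hset σ)]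
  refine integral_congr_ae ?_
  filter_upwards [ae_injective_pi μ n] with v hv
  rw [← sum_ite_monotone_eq_single_descents hv, Finset.sum_smul]
  simp [Set.indicator_apply]

end OrderedLetters

/-! ### Integrals of words weighted by their descents -/

section DescIntegral

variable {α R : Type*} [MeasurableSpace α] [NormedRing R] [NormedAlgebra ℝ R] {n : ℕ}

section Basic

variable [LT α] {μ : Measure α} {H : α → R}

/-- The integral of `H(v₁) ⋯ H(vₙ)` over all words `v` of length `n`, weighted by the function `w`
of the descent set of `v`. An element `∑ w(Desc σ) σ` of the descent algebra is thus evaluated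
without reference to permutations. -/
noncomputable def descIntegral (μ : Measure α) (H : α → R) (n : ℕ) (w : Finset ℕ → ℝ) : R :=
  ∫ v : Fin n → α, w (descents v) • wordProd H v ∂Measure.pi fun _ => μ

theorem descIntegral_congr {w w' : Finset ℕ → ℝ} (h : ∀ S ⊆ Finset.Ioo 0 n, w S = w' S) :
    descIntegral μ H n w = descIntegral μ H n w' := by
  simp only [descIntegral, h _ (descents_subset_Ioo _)]

theorem descIntegral_const_mul (c : ℝ) (w : Finset ℕ → ℝ) :
    descIntegral μ H n (fun S => c * w S) = c • descIntegral μ H n w := by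
  simp only [descIntegral, mul_smul, integral_smul]

theorem descIntegral_zero [CompleteSpace R] (w : Finset ℕ → ℝ) :
    descIntegral μ H 0 w = algebraMap ℝ R (w ∅) := by
  have (v : Fin 0 → α) : descents v = ∅ :=
    Finset.subset_empty.1 (by simpa using descents_subset_Ioo v)
  rw [descIntegral, Measure.pi_of_empty]
  simp [this, wordProd_zero, Algebra.algebraMap_eq_smul_one]

end Basic

variable [LinearOrder α] [TopologicalSpace α] [OrderClosedTopology α]
  [SecondCountableTopology α] [OpensMeasurableSpace α] {μ : Measure α} [SigmaFinite μ] {H : α → R}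

theorem integrable_smul_wordProd (hH : Integrable H μ) (w : Finset ℕ → ℝ) :
    Integrable (fun v : Fin n → α => w (descents v) • wordProd H v)
      (Measure.pi fun _ => μ) := by
  have hmeas : Measurable fun v : Fin n → α => w (descents v) :=
    (measurable_from_top (f := w)).comp measurable_descents
  refine (integrable_wordProd hH n).bdd_smul (∑ S ∈ (Finset.Ioo 0 n).powerset, ‖w S‖)
    hmeas.aestronglyMeasurable (.of_forall fun v => ?_)
  exact Finset.single_le_sum (f := fun S => ‖w S‖) (fun _ _ => norm_nonneg _)
    (Finset.mem_powerset.2 (descents_subset_Ioo v))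

theorem descIntegral_sum (hH : Integrable H μ) {ι : Type*} (s : Finset ι)
    (w : ι → Finset ℕ → ℝ) :
    descIntegral μ H n (fun S => ∑ i ∈ s, w i S) = ∑ i ∈ s, descIntegral μ H n (w i) := by
  simp only [descIntegral, Finset.sum_smul]
  exact integral_finsetSum _ fun i _ => integrable_smul_wordProd hH (w i)

theorem descIntegral_mul [CompleteSpace R] (hH : Integrable H μ) (m k : ℕ)
    (w w' : Finset ℕ → ℝ) :
    descIntegral μ H m w * descIntegral μ H k w' =
      descIntegral μ H (m + k) (concatWeight m w w') := by
  let F (p : (Fin m → α) × (Fin k → α)) : R :=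
    (w (descents p.1) • wordProd H p.1) * (w' (descents p.2) • wordProd H p.2)
  calc descIntegral μ H m w * descIntegral μ H k w'
      = ∫ p, F p ∂(Measure.pi fun _ => μ).prod (Measure.pi fun _ => μ) :=
        (integral_prod_bilin (ContinuousLinearMap.mul ℝ R) (integrable_smul_wordProd hH w)
          (integrable_smul_wordProd hH w')).symm
    _ = ∫ u, F (finAddArrowEquiv α m k u) ∂Measure.pi fun _ => μ :=
        ((measurePreserving_finAddArrowEquiv μ m k).integral_comp' F).symm
    _ = descIntegral μ H (m + k) (concatWeight m w w') := by
        simp only [F, descIntegral, concatWeight, finAddArrowEquiv_apply, descents_castAdd,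
          descents_natAdd, smul_mul_smul_comm, ← wordProd_add]

theorem natCast_smul_descIntegral_single_empty [CompleteSpace R] (hH : Integrable H μ) (n : ℕ) :
    (n : ℝ) • descIntegral μ H n (Pi.single ∅ 1) =
      ∑ m ∈ Finset.range n,
        descIntegral μ H m (Pi.single ∅ 1) * descIntegral μ H (n - m) dynkinWeight := by
  calc (n : ℝ) • descIntegral μ H n (Pi.single ∅ 1)
      = descIntegral μ H n fun S =>
          ∑ m ∈ Finset.range n, concatWeight m (Pi.single ∅ 1) dynkinWeight S := by
        rw [← descIntegral_const_mul]
        exact descIntegral_congr fun S hS =>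
          (sum_concatWeight_single_empty_dynkinWeight hS).symm
    _ = ∑ m ∈ Finset.range n, descIntegral μ H n (concatWeight m (Pi.single ∅ 1) dynkinWeight) :=
        descIntegral_sum hH _ _
    _ = ∑ m ∈ Finset.range n,
          descIntegral μ H m (Pi.single ∅ 1) * descIntegral μ H (n - m) dynkinWeight := by
        refine Finset.sum_congr rfl fun m hm => ?_
        rw [descIntegral_mul hH, Nat.add_sub_cancel' (Finset.mem_range.1 hm).le]

end DescIntegral

/-! ### Iterated integrals over the simplex -/

section IteratedIntegral

variable {R : Type*} [NormedRing R] [NormedAlgebra ℝ R]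

theorem Hperm_eq_setIntegral_monotone {n : ℕ} (H : ℝ → R) (σ : Equiv.Perm (Fin n)) (t : ℝ) :
    Hperm H σ t = ∫ u in {u : Fin n → ℝ | Monotone u}, wordProd H (u ∘ σ)
      ∂Measure.pi fun _ => volume.restrict (Set.Icc 0 t) := by
  have hsimplex : simplex n t = {u | Monotone u} ∩ Set.univ.pi fun _ => Set.Icc 0 t := by
    ext u
    simp [simplex, Monotone, Pi.le_def, forall_and, and_comm]
  rw [← Measure.restrict_pi_pi, Measure.restrict_restrict measurableSet_monotone, ← hsimplex]
  rfl

variable {H : ℝ → R} {t : ℝ}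

theorem sum_Hperm_eq_descIntegral (hH : IntegrableOn H (Set.Icc 0 t)) (n : ℕ) (S : Finset ℕ) :
    ∑ σ : Equiv.Perm (Fin n) with descSet σ = S, Hperm H σ t =
      descIntegral (volume.restrict (Set.Icc 0 t)) H n (Pi.single S 1) := by
  simp_rw [Hperm_eq_setIntegral_monotone]
  exact sum_integral_comp_perm_eq_integral_single_descents (integrable_wordProd hH n) S

theorem Hn_eq_descIntegral [CompleteSpace R] (hH : IntegrableOn H (Set.Icc 0 t)) (n : ℕ) :
    Hn H n t = descIntegral (volume.restrict (Set.Icc 0 t)) H n (Pi.single ∅ 1) := by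
  cases n with
  | zero => simp [Hn, descIntegral_zero]
  | succ n =>
    rw [← sum_Hperm_eq_descIntegral hH]
    simp [descSet_eq_empty_iff, Finset.filter_eq', Hn]

theorem HDyn_eq_descIntegral (hH : IntegrableOn H (Set.Icc 0 t)) {m : ℕ} (hm : 0 < m) :
    HDyn H m t = descIntegral (volume.restrict (Set.Icc 0 t)) H m dynkinWeight := by
  simp_rw [HDyn, sum_Hperm_eq_descIntegral hH, ← descIntegral_const_mul, ← descIntegral_sum hH]
  exact descIntegral_congr fun S hS => sum_single_Icc_eq_dynkinWeight hm hS

theorem natCast_smul_Hn [CompleteSpace R] (hH : IntegrableOn H (Set.Icc 0 t)) (n : ℕ) :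
    (n : ℝ) • Hn H n t = ∑ m ∈ Finset.range n, Hn H m t * HDyn H (n - m) t := by
  rw [Hn_eq_descIntegral hH, natCast_smul_descIntegral_single_empty hH]
  refine Finset.sum_congr rfl fun m hm => ?_
  rw [Hn_eq_descIntegral hH, HDyn_eq_descIntegral hH (Nat.sub_pos_of_lt (Finset.mem_range.1 hm))]

end IteratedIntegral

/-! ### Solving the recursion -/

section Recursion

variable {n : ℕ}

/-- The composition of `n` whose last block is `n - m` and whose other blocks form `c`. -/
def compositionSnoc (m : Fin n) (c : Composition m) : Composition n :=
  (c.append (.single (n - m) (by omega))).cast (by omega)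

theorem compositionSnoc_blocks (m : Fin n) (c : Composition m) :
    (compositionSnoc m c).blocks = c.blocks ++ [n - m] := rfl

theorem bijective_compositionSnoc (hn : 0 < n) :
    Function.Bijective fun p : (m : Fin n) × Composition m => compositionSnoc p.1 p.2 := by
  constructor
  · rintro ⟨m, c⟩ ⟨m', c'⟩ h
    have hblocks : c.blocks = c'.blocks :=
      (List.append_inj' (congrArg Composition.blocks h) rfl).1
    obtain rfl : m = m' := Fin.ext (by rw [← c.blocks_sum, hblocks, c'.blocks_sum])
    rw [Composition.ext hblocks]
  · intro c
    cases c using Composition.recOnAppendSingle with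
    | zero => exact absurd hn (lt_irrefl 0)
    | append_single k m c _ =>
      exact ⟨⟨⟨m, by omega⟩, c⟩, Composition.ext (by simp [compositionSnoc_blocks])⟩

theorem sum_composition_eq_sum_compositionSnoc {M : Type*} [AddCommMonoid M] (hn : 0 < n)
    (F : Composition n → M) :
    ∑ c, F c = ∑ m : Fin n, ∑ c : Composition m, F (compositionSnoc m c) := by
  rw [← (bijective_compositionSnoc hn).sum_comp F, Fintype.sum_sigma]

variable (K : Type*) {R : Type*} [Semifield K] [Semiring R] [Algebra K R]

/-- The summand `b_{k₁} ⋯ b_{k_l} / (k₁ (k₁ + k₂) ⋯ (k₁ + ⋯ + k_l))` of the singular frame formula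
for the composition `(k₁, …, k_l)`. -/
def singularFrameTerm (b : ℕ → R) (c : Composition n) : R :=
  (∏ i ∈ Finset.range c.length, (c.sizeUpTo (i + 1) : K))⁻¹ •
    (List.ofFn fun i => b (c.blocksFun i)).prod

theorem singularFrameTerm_zero (b : ℕ → R) (c : Composition 0) : singularFrameTerm K b c = 1 := by
  have hlength : c.length = 0 := Nat.le_zero.1 c.length_le
  simp [singularFrameTerm, hlength]

theorem singularFrameTerm_compositionSnoc (b : ℕ → R) (m : Fin n) (c : Composition m) :
    singularFrameTerm K b (compositionSnoc m c) =
      (n : K)⁻¹ • (singularFrameTerm K b c * b (n - m)) := by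
  have hprod {j : ℕ} (c : Composition j) :
      (List.ofFn fun i => b (c.blocksFun i)).prod = (c.blocks.map b).prod := by
    rw [← c.ofFn_blocksFun, List.map_ofFn]; rfl
  have hlength : (compositionSnoc m c).length = c.length + 1 := by
    simp [Composition.length, compositionSnoc_blocks]
  have hsize (i : ℕ) (hi : i ∈ Finset.range c.length) :
      ((compositionSnoc m c).sizeUpTo (i + 1) : K) = c.sizeUpTo (i + 1) := by
    rw [Composition.sizeUpTo, compositionSnoc_blocks,
      List.take_append_of_le_length (Finset.mem_range.1 hi), Composition.sizeUpTo]
  have hlast : (compositionSnoc m c).sizeUpTo (c.length + 1) = n := by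
    rw [← hlength, Composition.sizeUpTo_length]
  rw [singularFrameTerm, singularFrameTerm, hprod, hprod, hlength, Finset.prod_range_succ, hlast,
    Finset.prod_congr rfl hsize, compositionSnoc_blocks, List.map_append, List.prod_append,
    List.map_singleton, List.prod_singleton, mul_inv_rev, mul_smul, smul_mul_assoc]

theorem eq_sum_singularFrameTerm [CharZero K] {a b : ℕ → R} (h0 : a 0 = 1)
    (hrec : ∀ n : ℕ, (n : K) • a n = ∑ m ∈ Finset.range n, a m * b (n - m)) (n : ℕ) :
    a n = ∑ c : Composition n, singularFrameTerm K b c := by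
  induction n using Nat.strong_induction_on with
  | _ n ih =>
    rcases n.eq_zero_or_pos with rfl | hn
    · simp [h0, singularFrameTerm_zero, composition_card]
    · have hn' : (n : K) ≠ 0 := Nat.cast_ne_zero.2 hn.ne'
      calc a n = (n : K)⁻¹ • ∑ m : Fin n, a m * b (n - m) := by
            rw [← Finset.sum_range fun m => a m * b (n - m), ← hrec, inv_smul_smul₀ hn']
        _ = ∑ m : Fin n, ∑ c : Composition m,
              (n : K)⁻¹ • (singularFrameTerm K b c * b (n - m)) := by
            simp only [ih _ (Fin.is_lt _), Finset.sum_mul, Finset.smul_sum]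
        _ = ∑ c : Composition n, singularFrameTerm K b c := by
            simp only [sum_composition_eq_sum_compositionSnoc hn,
              singularFrameTerm_compositionSnoc]

end Recursion

theorem toy_universal_singular_frame_general (H : ℝ → A) (t : ℝ)
    (hH : IntegrableOn H (Set.Icc 0 t)) (l : ℝ) (n : ℕ) :
    l ^ n • Hn H n t =
      ∑ c : Composition n,
        (∏ i ∈ Finset.range c.length, (c.sizeUpTo (i + 1) : ℝ))⁻¹ •
          (List.ofFn (fun i : Fin c.length =>
              l ^ c.blocksFun i • HDyn H (c.blocksFun i) t)).prod := by
  have hrec (n : ℕ) : (n : ℝ) • l ^ n • Hn H n t =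
      ∑ m ∈ Finset.range n, (l ^ m • Hn H m t) * (l ^ (n - m) • HDyn H (n - m) t) := by
    rw [smul_comm, natCast_smul_Hn hH, Finset.smul_sum]
    refine Finset.sum_congr rfl fun m hm => ?_
    rw [smul_mul_smul_comm, ← pow_add, Nat.add_sub_cancel' (Finset.mem_range.1 hm).le]
  exact eq_sum_singularFrameTerm ℝ (a := fun n => l ^ n • Hn H n t)
    (b := fun k => l ^ k • HDyn H k t) (by simp [Hn]) hrec n

/-- universal singular frame formula for the toy model: with
`A_n^λ(t) = λ^n H_n(t)` and `β_m(t) = λ^m H_{𝒟_m}(t)`, for every `n ≥ 1`,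
`A_n^λ(t) = Σ_{k₁+⋯+k_l=n, k_i>0} β_{k₁}(t)⋯β_{k_l}(t)/(k₁(k₁+k₂)⋯(k₁+⋯+k_l))`,
the sum being over all compositions of `n`. -/
theorem toy_universal_singular_frame (H : ℝ → A) (hH : Continuous H)
    (t : ℝ) (ht : 0 ≤ t) (l : ℝ) (n : ℕ) (hn : 1 ≤ n) :
    l ^ n • Hn H n t =
      ∑ c : Composition n,
        (∏ i ∈ Finset.range c.length, (c.sizeUpTo (i + 1) : ℝ))⁻¹ •
          (List.ofFn (fun i : Fin c.length =>
              l ^ c.blocksFun i • HDyn H (c.blocksFun i) t)).prod :=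
  toy_universal_singular_frame_general H t hH.integrableOn_Icc l n
end
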